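/- arXiv:2203.00142 — 2 statements merged into one kernel-verified Lean document; each statement's English description precedes it below -/
import Mathlib

section
/- For the first-order Kuramoto model on the complete graph with n vertices: suppose for some 1 ≤ m < n the initial data satisfy ρ_1(0) = ρ_2(0) = ⋯ = ρ_m(0) > ρ_{m+1}(0) ≥ ⋯ ≥ ρ_n(0). Then for every solution ρ: (i) ρ_1(t) = ρ_2(t) = ⋯ = ρ_m(t) for all t ≥ 0; and (ii) ρ_1(t) − max_{m<j≤n} ρ_j(t) ≥ ρ_1(0) − max_{m<j≤n} ρ_j(0) for all t ≥ 0. -/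
/-- The maximum of `f` over the vertices `j` with `m ≤ j` (well-defined since `m < n`). -/
noncomputable def maxFrom {n : ℕ} (m : ℕ) (hm : m < n) (f : Fin n → ℝ) : ℝ :=
  (Finset.univ.filter (fun j : Fin n => m ≤ (j : ℕ))).sup'
    (by exact ⟨⟨m, hm⟩, by simp⟩) f

lemma kur_nonneg (f f' : ℝ → ℝ) (C : ℝ) (hC : 0 ≤ C)
    (hf : ∀ t ≥ (0 : ℝ), HasDerivAt f (f' t) t)
    (hb : ∀ t ≥ (0 : ℝ), -(C * |f t|) ≤ f' t) (h0 : 0 ≤ f 0) :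
    ∀ t ≥ (0 : ℝ), 0 ≤ f t := by
  intro T hT
  have key : ∀ ε > (0 : ℝ), -f T ≤ ε * Real.exp ((C + 1) * T) := by
    intro ε hε
    have hB : ∀ x : ℝ, HasDerivAt (fun t => ε * Real.exp ((C + 1) * t))
        (ε * (Real.exp ((C + 1) * x) * (C + 1))) x := by
      intro x
      have h1 : HasDerivAt (fun t : ℝ => (C + 1) * t) (C + 1) x := by
        simpa using (hasDerivAt_id x).const_mul (C + 1)
      exact (h1.exp).const_mul ε
    refine image_le_of_deriv_right_lt_deriv_boundary (f := fun t => -f t)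
      (f' := fun t => -f' t) (a := 0) (b := T)
      (fun x hx => (hf x hx.1).continuousAt.neg.continuousWithinAt)
      (fun x hx => (hf x hx.1).neg.hasDerivWithinAt) ?_ hB ?_ ⟨hT, le_refl T⟩
    · simp; linarith
    · intro x hx he
      have hp : 0 < ε * Real.exp ((C + 1) * x) := by positivity
      have h2 := hb x hx.1
      have h3 : |f x| = ε * Real.exp ((C + 1) * x) := by
        rw [← he, abs_of_nonpos]
        have : -f x = ε * Real.exp ((C + 1) * x) := he
        linarith
      rw [h3] at h2
      show -f' x < _
      nlinarith
  by_contra hneg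
  push Not at hneg
  have he : 0 < Real.exp ((C + 1) * T) := Real.exp_pos _
  have := key (-f T / 2 / Real.exp ((C + 1) * T)) (by apply div_pos <;> linarith)
  rw [div_mul_cancel₀ _ he.ne'] at this
  linarith

lemma kur_lip (θm : ℝ → ℝ) (L : NNReal) (hθlip : LipschitzWith L θm) (hθmono : Monotone θm)
    (hθ0 : θm 0 = 0) (a b c : ℝ) (ha : a ∈ Set.Icc (0 : ℝ) 1) (hb : b ∈ Set.Icc (0 : ℝ) 1)
    (hc : c ∈ Set.Icc (0 : ℝ) 1) :
    |θm (min a c) * (a - c) - θm (min b c) * (b - c)| ≤ (L + θm 1) * |a - b| := by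
  have e : θm (min a c) * (a - c) - θm (min b c) * (b - c)
      = (θm (min a c) - θm (min b c)) * (a - c) + θm (min b c) * (a - b) := by ring
  have h1 : |θm (min a c) - θm (min b c)| ≤ L * |a - b| := by
    have h := hθlip.dist_le_mul (min a c) (min b c)
    rw [Real.dist_eq, Real.dist_eq] at h
    refine h.trans (mul_le_mul_of_nonneg_left ?_ L.2)
    have := abs_min_sub_min_le_max a c b c
    simpa using this
  have h2 : |a - c| ≤ 1 := by
    rw [abs_le]; constructor <;> linarith [ha.1, ha.2, hc.1, hc.2]
  have h3 : |θm (min b c)| ≤ θm 1 := by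
    rw [abs_of_nonneg]
    · exact hθmono ((min_le_left _ _).trans hb.2)
    · rw [← hθ0]; exact hθmono (le_min hb.1 hc.1)
  rw [e]
  refine (abs_add_le _ _).trans ?_
  rw [abs_mul, abs_mul, add_mul]
  refine add_le_add ?_ (mul_le_mul_of_nonneg_right h3 (abs_nonneg _))
  calc _ ≤ |θm (min a c) - θm (min b c)| * 1 := mul_le_mul_of_nonneg_left h2 (abs_nonneg _)
    _ ≤ _ := by rw [mul_one]; exact h1

lemma kur_mono (θm : ℝ → ℝ) (hθmono : Monotone θm)
    (hθ0 : θm 0 = 0) (a b c : ℝ) (hb : 0 ≤ b) (hc : 0 ≤ c) (hba : b ≤ a) (hca : c ≤ a) :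
    θm (min b c) * (b - c) ≤ θm (min a c) * (a - c) := by
  have hθc : 0 ≤ θm c := by rw [← hθ0]; exact hθmono hc
  have hθb : 0 ≤ θm b := by rw [← hθ0]; exact hθmono hb
  rw [min_eq_right hca]
  rcases le_total c b with h | h
  · rw [min_eq_right h]; nlinarith
  · rw [min_eq_left h]
    have := mul_nonneg hθb (sub_nonneg.2 h)
    have := mul_nonneg hθc (sub_nonneg.2 hca)
    linarith

/-- First-order Kuramoto model on the complete graph with `n` vertices:
if initially `ρ_1(0) = ⋯ = ρ_m(0) > ρ_{m+1}(0) ≥ ⋯ ≥ ρ_n(0)` (vertices are indexed by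
`Fin n`, so "vertex 1" is the index with value `0`), then the first `m` coordinates stay
equal for all `t ≥ 0`, and the gap `ρ_1(t) - max_{m < j ≤ n} ρ_j(t)` is bounded below by
its initial value. -/
theorem kuramoto_complete_leading_block
    (n : ℕ) (hn : 2 ≤ n) (κ : ℝ) (hκ : 0 < κ)
    (θm : ℝ → ℝ) (L : NNReal) (hθlip : LipschitzWith L θm) (hθmono : Monotone θm)
    (hθ0 : θm 0 = 0) (hθpos : ∀ x : ℝ, 0 < x → 0 < θm x)
    (ρ : ℝ → Fin n → ℝ)
    (hode : ∀ t ≥ (0 : ℝ), ∀ j : Fin n, HasDerivAt (fun s => ρ s j)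
      (κ * ∑ k : Fin n, θm (min (ρ t j) (ρ t k)) * (ρ t j - ρ t k)) t)
    (hrange : ∀ t ≥ (0 : ℝ), ∀ j : Fin n, ρ t j ∈ Set.Icc (0 : ℝ) 1)
    (hsum : ∀ t ≥ (0 : ℝ), ∑ j : Fin n, ρ t j = 1)
    (m : ℕ) (hm1 : 1 ≤ m) (hmn : m < n)
    (i0 : Fin n) (hi0 : (i0 : ℕ) = 0)
    (heq : ∀ j : Fin n, (j : ℕ) < m → ρ 0 j = ρ 0 i0)
    (hgt : ∀ j : Fin n, m ≤ (j : ℕ) → ρ 0 j < ρ 0 i0)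
    (hsorted : ∀ j k : Fin n, m ≤ (j : ℕ) → j ≤ k → ρ 0 k ≤ ρ 0 j) :
    (∀ t ≥ (0 : ℝ), ∀ j : Fin n, (j : ℕ) < m → ρ t j = ρ t i0) ∧
    (∀ t ≥ (0 : ℝ),
      ρ 0 i0 - maxFrom m hmn (ρ 0) ≤ ρ t i0 - maxFrom m hmn (ρ t)) := by
  have hd : ∀ i j : Fin n, ∀ t ≥ (0 : ℝ), HasDerivAt (fun s => ρ s i - ρ s j)
      (κ * ∑ k : Fin n, (θm (min (ρ t i) (ρ t k)) * (ρ t i - ρ t k)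
        - θm (min (ρ t j) (ρ t k)) * (ρ t j - ρ t k))) t := by
    intro i j t ht
    rw [Finset.sum_sub_distrib, mul_sub]
    exact (hode t ht i).sub (hode t ht j)
  have hθ1 : 0 < θm 1 := hθpos 1 one_pos
  have hord : ∀ i j : Fin n, ρ 0 j ≤ ρ 0 i → ∀ t ≥ (0 : ℝ), ρ t j ≤ ρ t i := by
    intro i j h0 t ht
    have := kur_nonneg (fun s => ρ s i - ρ s j) _ (κ * (n * (L + θm 1))) (by positivity)
      (hd i j) ?_ (sub_nonneg.2 h0) t ht
    · exact sub_nonneg.1 this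
    · intro s hs
      rw [mul_assoc, ← mul_neg]
      refine mul_le_mul_of_nonneg_left ?_ hκ.le
      refine (abs_le.1 ?_).1
      refine (Finset.abs_sum_le_sum_abs _ _).trans ?_
      refine (Finset.sum_le_sum fun k _ => kur_lip θm L hθlip hθmono hθ0 _ _ _
        (hrange s hs i) (hrange s hs j) (hrange s hs k)).trans ?_
      simp [mul_assoc]
  have hmax : ∀ j : Fin n, ρ 0 j ≤ ρ 0 i0 := fun j =>
    (lt_or_ge (j : ℕ) m).elim (fun h => (heq j h).le) (fun h => (hgt j h).le)
  refine ⟨fun t ht j hj => le_antisymm (hord _ _ (heq j hj).le t ht)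
    (hord _ _ (heq j hj).ge t ht), fun t ht => ?_⟩
  have hgap : ∀ j : Fin n, ρ 0 i0 - ρ 0 j ≤ ρ t i0 - ρ t j := by
    intro j
    have hm : MonotoneOn (fun s => ρ s i0 - ρ s j) (Set.Ici 0) := by
      refine monotoneOn_of_hasDerivWithinAt_nonneg (convex_Ici 0)
        (fun x hx => (hd i0 j x hx).continuousAt.continuousWithinAt)
        (fun x hx => (hd i0 j x (interior_subset hx)).hasDerivWithinAt) ?_
      intro x hx
      have hx0 : x ≥ 0 := interior_subset hx
      refine mul_nonneg hκ.le (Finset.sum_nonneg fun k _ => sub_nonneg.2 ?_)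
      exact kur_mono θm hθmono hθ0 _ _ _ (hrange x hx0 j).1 (hrange x hx0 k).1
        (hord _ _ (hmax j) x hx0) (hord _ _ (hmax k) x hx0)
    exact hm (Set.mem_Ici.2 le_rfl) ht ht
  have h2 : maxFrom m hmn (ρ t) ≤ ρ t i0 - ρ 0 i0 + maxFrom m hmn (ρ 0) := by
    refine Finset.sup'_le _ _ fun j hj => ?_
    have h3 : ρ 0 j ≤ maxFrom m hmn (ρ 0) := Finset.le_sup' (ρ 0) hj
    linarith [hgap j]
  linarith
end

section
/- Consider the first-order Kuramoto model on the complete graph with n vertices with κ = 1 and θ̃(x) = x^α for x ≥ 0, where α > 1 is fixed. Suppose the initial data satisfy ρ_1(0) > ρ_j(0) for all 2 ≤ j ≤ n with ρ_1(0) < 1, and set δ = ρ_1(0) − max_{2≤j≤n} ρ_j(0) > 0. Then every solution ρ satisfies, for all t ≥ 0, ((1 − ρ_1(0))^{1−α} + n(α−1)t)^{−1/(α−1)} ≤ 1 − ρ_1(t) ≤ ((1 − ρ_1(0))^{1−α} + δ·n^{1−α}·(α−1)t)^{−1/(α−1)}; in particular 1 − ρ_1(t) decays at the algebraic rate t^{−1/(α−1)}.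 -/
/-- The maximum of `f` over all vertices different from `i0` (well-defined since `n ≥ 2`). -/
noncomputable def maxExcept {n : ℕ} (hn : 2 ≤ n) (i0 : Fin n) (f : Fin n → ℝ) : ℝ :=
  (Finset.univ.erase i0).sup'
    (by
      rw [Finset.erase_nonempty (Finset.mem_univ i0)]
      exact Finset.one_lt_card_iff_nontrivial.mp
        (by simp only [Finset.card_univ, Fintype.card_fin]; omega)) f

theorem kur_mono_s8 (f f' : ℝ → ℝ) (a b : ℝ) (hab : a ≤ b)
    (hf : ∀ t ∈ Set.Icc a b, HasDerivAt f (f' t) t) (h0 : ∀ t ∈ Set.Icc a b, 0 ≤ f' t) :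
    f a ≤ f b := by
  have : MonotoneOn f (Set.Icc a b) := by
    apply monotoneOn_of_deriv_nonneg (convex_Icc a b)
    · exact fun t ht => (hf t ht).continuousAt.continuousWithinAt
    · exact fun t ht => (hf t (interior_subset ht)).differentiableAt.differentiableWithinAt
    · intro t ht
      rw [(hf t (interior_subset ht)).deriv]
      exact h0 t (interior_subset ht)
  exact this (Set.left_mem_Icc.2 hab) (Set.right_mem_Icc.2 hab) hab

theorem kur_term (α a b c : ℝ) (hα : 1 < α) (hb : 0 ≤ b) (hc : 0 ≤ c) (hba : b ≤ a)
    (hca : c ≤ a) : min b c ^ α * (b - c) ≤ min a c ^ α * (a - c) := by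
  rw [min_eq_right hca]
  have h1 : min b c ^ α ≤ c ^ α :=
    Real.rpow_le_rpow (le_min hb hc) (min_le_right _ _) (by linarith)
  have h2 : 0 ≤ min b c ^ α := Real.rpow_nonneg (le_min hb hc) _
  calc _ ≤ min b c ^ α * (a - c) := mul_le_mul_of_nonneg_left (by linarith) h2
    _ ≤ _ := mul_le_mul_of_nonneg_right h1 (by linarith)

theorem kur_gap (n : ℕ) (α : ℝ) (hα : 1 < α)
    (ρ : ℝ → Fin n → ℝ)
    (hode : ∀ t ≥ (0 : ℝ), ∀ j : Fin n, HasDerivAt (fun s => ρ s j)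
      (∑ k : Fin n, (min (ρ t j) (ρ t k)) ^ α * (ρ t j - ρ t k)) t)
    (hrange : ∀ t ≥ (0 : ℝ), ∀ j : Fin n, ρ t j ∈ Set.Icc (0 : ℝ) 1)
    (i0 : Fin n) (δ : ℝ) (hδpos : 0 < δ) (h0 : ∀ j ≠ i0, δ ≤ ρ 0 i0 - ρ 0 j) :
    ∀ t ≥ (0 : ℝ), ∀ j ≠ i0, δ ≤ ρ t i0 - ρ t j := by
  intro T hT
  have hcont : ∀ j, ∀ t ≥ (0 : ℝ), ContinuousAt (fun s => ρ s i0 - ρ s j) t :=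
    fun j t ht => ((hode t ht i0).sub (hode t ht j)).continuousAt
  let S : Set ℝ := {t | ∀ j ≠ i0, δ ≤ ρ t i0 - ρ t j}
  have hcl : IsClosed (S ∩ Set.Icc 0 T) := by
    have : S ∩ Set.Icc 0 T = Set.Icc 0 T ∩ ⋂ j, ⋂ (_ : j ≠ i0), (Set.Icc 0 T ∩
        (fun s => ρ s i0 - ρ s j) ⁻¹' Set.Ici δ) := by
      ext x
      simp only [S, Set.mem_inter_iff, Set.mem_setOf_eq, Set.mem_iInter, Set.mem_preimage,
        Set.mem_Ici]
      constructor
      · rintro ⟨h1, h2⟩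
        exact ⟨h2, fun j hj => ⟨h2, h1 j hj⟩⟩
      · rintro ⟨h1, h2⟩
        exact ⟨fun j hj => (h2 j hj).2, h1⟩
    rw [this]
    refine isClosed_Icc.inter (isClosed_iInter fun j => isClosed_iInter fun _ => ?_)
    exact ContinuousOn.preimage_isClosed_of_isClosed
      (fun t ht => (hcont j t ht.1).continuousWithinAt) isClosed_Icc isClosed_Ici
  have hsub : Set.Icc 0 T ⊆ S := by
    refine hcl.Icc_subset_of_forall_mem_nhdsWithin h0 ?_
    rintro x ⟨hx, hx0, hxT⟩
    have hev : ∀ᶠ y in nhds x, ∀ j, j ≠ i0 → 0 < ρ y i0 - ρ y j := by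
      rw [Filter.eventually_all]
      intro j
      by_cases hj : j = i0
      · simp [hj]
      · filter_upwards [(hcont j x hx0).eventually (lt_mem_nhds (lt_of_lt_of_le hδpos (hx j hj)))]
          with y hy _ using hy
    obtain ⟨ε, hε, hball⟩ := Metric.eventually_nhds_iff.1 hev
    have : Set.Ioo x (x + ε) ∈ nhdsWithin x (Set.Ioi x) := Ioo_mem_nhdsGT (by linarith)
    filter_upwards [this] with y hy j hj
    refine (hx j hj).trans ?_
    refine kur_mono_s8 (fun s => ρ s i0 - ρ s j) _ x y hy.1.le
      (fun t ht => (hode t (hx0.trans ht.1) i0).sub (hode t (hx0.trans ht.1) j)) ?_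
    intro t ht
    have ht0 : 0 ≤ t := hx0.trans ht.1
    have hd : dist t x < ε := by
      rw [Real.dist_eq, abs_of_nonneg (by linarith [ht.1])]
      linarith [ht.2, hy.2]
    have hle : ∀ k, ρ t k ≤ ρ t i0 := by
      intro k
      by_cases hk : k = i0
      · rw [hk]
      · linarith [hball hd k hk]
    rw [sub_nonneg]
    exact Finset.sum_le_sum fun k _ => kur_term α _ _ _ hα (hrange t ht0 j).1 (hrange t ht0 k).1
      (hle j) (hle k)
  exact hsub ⟨hT, le_rfl⟩

/-- First-order Kuramoto model on the complete graph with `n` vertices,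
`κ = 1` and `θ̃(x) = x^α` (real power, `α > 1`): if vertex `1` (the index `i0` with
`i0.val = 0`) is the unique initial maximizer with `ρ_1(0) < 1` and `δ` is the initial
leading gap, then for all `t ≥ 0`,
`((1-ρ_1(0))^{1-α} + n(α-1)t)^{-1/(α-1)} ≤ 1-ρ_1(t)
  ≤ ((1-ρ_1(0))^{1-α} + δ n^{1-α}(α-1)t)^{-1/(α-1)}`;
in particular `1-ρ_1(t)` decays algebraically like `t^{-1/(α-1)}`. -/
theorem kuramoto_complete_algebraic_convergence
    (n : ℕ) (hn : 2 ≤ n) (α : ℝ) (hα : 1 < α)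
    (ρ : ℝ → Fin n → ℝ)
    (hode : ∀ t ≥ (0 : ℝ), ∀ j : Fin n, HasDerivAt (fun s => ρ s j)
      (∑ k : Fin n, (min (ρ t j) (ρ t k)) ^ α * (ρ t j - ρ t k)) t)
    (hrange : ∀ t ≥ (0 : ℝ), ∀ j : Fin n, ρ t j ∈ Set.Icc (0 : ℝ) 1)
    (hsum : ∀ t ≥ (0 : ℝ), ∑ j : Fin n, ρ t j = 1)
    (i0 : Fin n) (hi0 : (i0 : ℕ) = 0)
    (hmax : ∀ j : Fin n, j ≠ i0 → ρ 0 j < ρ 0 i0) (hlt1 : ρ 0 i0 < 1)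
    (δ : ℝ) (hδ : δ = ρ 0 i0 - maxExcept hn i0 (ρ 0)) (hδpos : 0 < δ) :
    ∀ t ≥ (0 : ℝ),
      ((1 - ρ 0 i0) ^ ((1 : ℝ) - α) + (n : ℝ) * (α - 1) * t) ^ (-(1 / (α - 1)))
        ≤ 1 - ρ t i0 ∧
      1 - ρ t i0 ≤
        ((1 - ρ 0 i0) ^ ((1 : ℝ) - α)
          + δ * (n : ℝ) ^ ((1 : ℝ) - α) * (α - 1) * t) ^ (-(1 / (α - 1))) := by
  have hgap := kur_gap n α hα ρ hode hrange i0 δ hδpos (fun j hj => by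
    have : ρ 0 j ≤ maxExcept hn i0 (ρ 0) :=
      Finset.le_sup' (ρ 0) (Finset.mem_erase.2 ⟨hj, Finset.mem_univ j⟩)
    linarith)
  have hn0 : (0 : ℝ) < n := by positivity
  have hsplit : ∀ t ≥ (0 : ℝ), ∑ j ∈ Finset.univ.erase i0, ρ t j = 1 - ρ t i0 := by
    intro t ht
    rw [← hsum t ht, ← Finset.add_sum_erase _ _ (Finset.mem_univ i0)]
    ring
  have hD : ∀ t ≥ (0 : ℝ), (∑ k : Fin n, (min (ρ t i0) (ρ t k)) ^ α * (ρ t i0 - ρ t k)) =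
      ∑ k ∈ Finset.univ.erase i0, ρ t k ^ α * (ρ t i0 - ρ t k) := by
    intro t ht
    rw [← Finset.add_sum_erase _ _ (Finset.mem_univ i0), sub_self, mul_zero, zero_add]
    refine Finset.sum_congr rfl fun k hk => ?_
    rw [min_eq_right (by linarith [hgap t ht k (Finset.ne_of_mem_erase hk)])]
  have hcard : (((Finset.univ.erase i0).card : ℕ) : ℝ) ≤ n := by
    have := Finset.card_le_univ (Finset.univ.erase i0)
    rw [Fintype.card_fin] at this
    exact_mod_cast this
  have hup : ∀ t ≥ (0 : ℝ), (∑ k : Fin n, (min (ρ t i0) (ρ t k)) ^ α * (ρ t i0 - ρ t k)) ≤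
      n * (1 - ρ t i0) ^ α := by
    intro t ht
    rw [hD t ht]
    calc _ ≤ ∑ k ∈ Finset.univ.erase i0, (1 - ρ t i0) ^ α := by
          refine Finset.sum_le_sum fun k hk => ?_
          have hk0 := hrange t ht k
          have h1 : ρ t k ≤ 1 - ρ t i0 := by
            rw [← hsplit t ht]
            exact Finset.single_le_sum (f := ρ t) (fun j _ => (hrange t ht j).1) hk
          calc _ ≤ ρ t k ^ α * 1 := mul_le_mul_of_nonneg_left
                (by linarith [(hrange t ht i0).2, hk0.1]) (Real.rpow_nonneg hk0.1 _)
            _ ≤ _ := by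
                rw [mul_one]
                exact Real.rpow_le_rpow hk0.1 h1 (by linarith)
      _ ≤ _ := by
          rw [Finset.sum_const, nsmul_eq_mul]
          exact mul_le_mul_of_nonneg_right hcard
            (Real.rpow_nonneg (by linarith [(hrange t ht i0).2]) _)
  have hlow : ∀ t ≥ (0 : ℝ), δ * (n : ℝ) ^ ((1 : ℝ) - α) * (1 - ρ t i0) ^ α ≤
      (∑ k : Fin n, (min (ρ t i0) (ρ t k)) ^ α * (ρ t i0 - ρ t k)) := by
    intro t ht
    rw [hD t ht]
    have hpm := Real.rpow_sum_le_const_mul_sum_rpow_of_nonneg (s := Finset.univ.erase i0)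
      (f := ρ t) hα.le (fun j _ => (hrange t ht j).1)
    rw [hsplit t ht] at hpm
    have hS : 0 ≤ ∑ k ∈ Finset.univ.erase i0, ρ t k ^ α :=
      Finset.sum_nonneg fun k _ => Real.rpow_nonneg (hrange t ht k).1 _
    have h2 : (1 - ρ t i0) ^ α ≤ (n : ℝ) ^ (α - 1) * ∑ k ∈ Finset.univ.erase i0, ρ t k ^ α :=
      hpm.trans (mul_le_mul_of_nonneg_right
        (Real.rpow_le_rpow (by positivity) hcard (by linarith)) hS)
    have h3 : (n : ℝ) ^ ((1 : ℝ) - α) * (n : ℝ) ^ (α - 1) = 1 := by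
      rw [← Real.rpow_add hn0]
      simp
    calc _ ≤ δ * (n : ℝ) ^ ((1 : ℝ) - α) *
          ((n : ℝ) ^ (α - 1) * ∑ k ∈ Finset.univ.erase i0, ρ t k ^ α) :=
          mul_le_mul_of_nonneg_left h2 (by positivity)
      _ = δ * ((n : ℝ) ^ ((1 : ℝ) - α) * (n : ℝ) ^ (α - 1)) *
          ∑ k ∈ Finset.univ.erase i0, ρ t k ^ α := by ring
      _ = ∑ k ∈ Finset.univ.erase i0, ρ t k ^ α * δ := by
          rw [h3, mul_one, mul_comm, Finset.sum_mul]
      _ ≤ _ := Finset.sum_le_sum fun k hk => mul_le_mul_of_nonneg_left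
          (hgap t ht k (Finset.ne_of_mem_erase hk)) (Real.rpow_nonneg (hrange t ht k).1 _)
  have hm : ∀ t ≥ (0 : ℝ), HasDerivAt (fun s => 1 - ρ s i0)
      (-(∑ k : Fin n, (min (ρ t i0) (ρ t k)) ^ α * (ρ t i0 - ρ t k))) t :=
    fun t ht => (hode t ht i0).const_sub 1
  obtain ⟨F, hF⟩ : ∃ F : ℝ → ℝ, ∀ t, F t =
    ∑ k : Fin n, (min (ρ t i0) (ρ t k)) ^ α * (ρ t i0 - ρ t k) := ⟨_, fun _ => rfl⟩
  simp only [← hF] at hm hlow hup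
  have hpos : ∀ t ≥ (0 : ℝ), 0 < 1 - ρ t i0 := by
    intro t ht
    have key := kur_mono_s8 (fun s => (1 - ρ s i0) * Real.exp (n * s))
      (fun s => -F s * Real.exp (n * s) + (1 - ρ s i0) * (Real.exp (n * s) * (n * 1))) 0 t ht
      (fun s hs => (hm s hs.1).mul (((hasDerivAt_id s).const_mul (n : ℝ)).exp)) (by
        intro s hs
        have h1 := hup s hs.1
        have h2 : (1 - ρ s i0) ^ α ≤ 1 - ρ s i0 := by
          have := hrange s hs.1 i0
          calc (1 - ρ s i0) ^ α ≤ (1 - ρ s i0) ^ (1 : ℝ) :=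
                Real.rpow_le_rpow_of_exponent_ge' (by linarith [this.2]) (by linarith [this.1])
                  zero_le_one hα.le
            _ = _ := Real.rpow_one _
        have h3 : 0 ≤ n * (1 - ρ s i0) - F s := by
          have := mul_le_mul_of_nonneg_left h2 hn0.le
          linarith
        have := mul_nonneg h3 (Real.exp_pos (n * s)).le
        linarith)
    simp only [mul_zero, Real.exp_zero, mul_one] at key
    exact pos_of_mul_pos_left (lt_of_lt_of_le (by linarith) key) (Real.exp_pos _).le
  intro t ht
  have hder : ∀ s ≥ (0 : ℝ), HasDerivAt (fun s => (1 - ρ s i0) ^ ((1 : ℝ) - α))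
      ((α - 1) * (F s * (1 - ρ s i0) ^ (-α))) s := by
    intro s hs
    have := (hm s hs).rpow_const (p := (1 : ℝ) - α) (Or.inl (hpos s hs).ne')
    convert this using 1
    rw [show (1 : ℝ) - α - 1 = -α by ring]
    ring
  have hinv : ∀ s ≥ (0 : ℝ), (1 - ρ s i0) ^ α * (1 - ρ s i0) ^ (-α) = 1 := by
    intro s hs
    rw [← Real.rpow_add (hpos s hs)]
    simp
  have hA : 0 < (1 - ρ 0 i0) ^ ((1 : ℝ) - α) := Real.rpow_pos_of_pos (by linarith) _
  have hα1 : 0 < α - 1 := by linarith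
  have hback : 1 - ρ t i0 = ((1 - ρ t i0) ^ ((1 : ℝ) - α)) ^ (-(1 / (α - 1))) := by
    rw [← Real.rpow_mul (hpos t ht).le]
    have : (1 - α) * (-(1 / (α - 1))) = 1 := by
      field_simp
      ring
    rw [this, Real.rpow_one]
  have hneg : -(1 / (α - 1)) ≤ 0 := by
    have : 0 < 1 / (α - 1) := by positivity
    linarith
  have hlin : ∀ (C s : ℝ), HasDerivAt (fun s : ℝ => C * s) C s := fun C s => by
    simpa using (hasDerivAt_id s).const_mul C
  constructor
  · have key := kur_mono_s8 (fun s => (n : ℝ) * (α - 1) * s - (1 - ρ s i0) ^ ((1 : ℝ) - α)) _ 0 t ht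
      (fun s hs => (hlin _ s).sub (hder s hs.1)) (by
        intro s hs
        have h := mul_le_mul_of_nonneg_right (hup s hs.1)
          (Real.rpow_nonneg (hpos s hs.1).le (-α))
        rw [mul_assoc, hinv s hs.1] at h
        have := mul_le_mul_of_nonneg_left h hα1.le
        linarith)
    simp only [mul_zero] at key
    rw [hback]
    exact Real.rpow_le_rpow_of_nonpos (Real.rpow_pos_of_pos (hpos t ht) _) (by linarith) hneg
  · have key := kur_mono_s8 (fun s => (1 - ρ s i0) ^ ((1 : ℝ) - α) -
      δ * (n : ℝ) ^ ((1 : ℝ) - α) * (α - 1) * s) _ 0 t ht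
      (fun s hs => (hder s hs.1).sub (hlin _ s)) (by
        intro s hs
        have h := mul_le_mul_of_nonneg_right (hlow s hs.1)
          (Real.rpow_nonneg (hpos s hs.1).le (-α))
        rw [mul_assoc, hinv s hs.1] at h
        have := mul_le_mul_of_nonneg_left h hα1.le
        linarith)
    simp only [mul_zero] at key
    rw [hback]
    exact Real.rpow_le_rpow_of_nonpos (by positivity) (by linarith) hneg
end
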